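/- Let Φ be a finite, reduced, irreducible, crystallographic root system with base Δ, positive roots Φ⁺, highest root θ = Σ_{β∈Δ} m_β·β, and Coxeter number h = 1 + Σ_{β∈Δ} m_β. Then for every long simple root α ∈ Δ one has Σ_{γ∈Φ⁺, ⟨γ,α^∨⟩ = −1} ⟨α,γ^∨⟩ = 2 − h. In particular, this sum is even if and only if the Coxeter number h is even. -/

import Mathlib

open scoped RealInnerProductSpace
open scoped Classical

noncomputable section

variable {V : Type*} [NormedAddCommGroup V] [InnerProductSpace ℝ V]

/-- The coroot pairing `⟨x, γ^∨⟩ = 2(x,γ)/(γ,γ)`. -/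
def corootPairing (x γ : V) : ℝ := 2 * ⟪x, γ⟫ / ⟪γ, γ⟫

/-- The reflection `s_γ(x) = x - ⟨x,γ^∨⟩γ` associated to a root `γ`. -/
def rootReflection (γ x : V) : V := x - corootPairing x γ • γ

/-- A finite, reduced, crystallographic root system `Φ` in a real inner product
space `V`, together with a base (set of simple roots) `Δ` and the integral
coefficients `coeff γ β` of each root `γ` on each simple root `β`. -/
structure RootSystemWithBase (V : Type*) [NormedAddCommGroup V]
    [InnerProductSpace ℝ V] : Type _ where
  /-- the set of roots -/
  Φ : Finset V
  /-- the base (set of simple roots) -/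
  Δ : Finset V
  /-- the coefficient of the root `γ` on the simple root `β` -/
  coeff : V → V → ℤ
  zero_not_mem : (0 : V) ∉ Φ
  spans : Submodule.span ℝ (Φ : Set V) = ⊤
  crystallographic : ∀ γ ∈ Φ, ∀ δ ∈ Φ, ∃ n : ℤ, corootPairing γ δ = n
  reflection_mem : ∀ γ ∈ Φ, ∀ δ ∈ Φ, rootReflection γ δ ∈ Φ
  reduced : ∀ γ ∈ Φ, ∀ c : ℝ, c • γ ∈ Φ → c = 1 ∨ c = -1
  base_subset : Δ ⊆ Φ
  base_indep : LinearIndependent ℝ (fun β : (Δ : Set V) => (β : V))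
  root_eq_sum : ∀ γ ∈ Φ, γ = ∑ β ∈ Δ, (coeff γ β : ℝ) • β
  root_sign : ∀ γ ∈ Φ, (∀ β ∈ Δ, 0 ≤ coeff γ β) ∨ (∀ β ∈ Δ, coeff γ β ≤ 0)

namespace RootSystemWithBase

variable (R : RootSystemWithBase V)

/-- The positive roots `Φ⁺` with respect to the base `Δ`. -/
def Pos : Finset V := R.Φ.filter fun γ => ∀ β ∈ R.Δ, 0 ≤ R.coeff γ β

/-- The negative roots `Φ⁻ = -Φ⁺`. -/
def Neg : Finset V := R.Pos.image fun γ => -γ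

/-- Irreducibility: `Φ` admits no decomposition into two nonempty mutually
orthogonal subsets. -/
def Irreducible : Prop :=
  ∀ S ⊆ R.Φ, (∀ γ ∈ S, ∀ δ ∈ R.Φ, δ ∉ S → ⟪γ, δ⟫ = 0) → S = ∅ ∨ S = R.Φ

/-- `θ` is the highest root: it is a root whose coefficients on the base
dominate those of every root. -/
def IsHighestRoot (θ : V) : Prop :=
  θ ∈ R.Φ ∧ ∀ γ ∈ R.Φ, ∀ β ∈ R.Δ, R.coeff γ β ≤ R.coeff θ β

end RootSystemWithBase

/-!
A long positive root `α` has the same sum `∑ |⟨·,γ^∨⟩|` over the positive roots as the highest root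
`θ`, because this sum is invariant under simple reflections and every long root can be moved to `θ`
by such reflections. For `θ` all terms are nonnegative, so the sum is `∑ ⟨θ,γ^∨⟩ = 2 ht θ`; for `α`
the signed sum is `∑ ⟨α,γ^∨⟩ = 2 ht α`. Half the difference of the two is the sum of the negative
`⟨α,γ^∨⟩`, and since `α` is long these are the terms with `⟨γ,α^∨⟩ = -1`.
-/

lemma two_nsmul_sum_filter_neg {ι G : Type*} [AddCommGroup G] [LinearOrder G]
    [IsOrderedAddMonoid G] (s : Finset ι) (f : ι → G) :
    2 • ∑ i ∈ s with f i < 0, f i = ∑ i ∈ s, f i - ∑ i ∈ s, |f i| := by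
  rw [Finset.sum_filter, Finset.smul_sum, ← Finset.sum_sub_distrib]
  refine Finset.sum_congr rfl fun i _ => ?_
  split_ifs with hi
  · rw [abs_of_neg hi, sub_neg_eq_add, two_nsmul]
  · rw [abs_of_nonneg (not_lt.1 hi), sub_self, smul_zero]

lemma corootPairing_neg_left (x γ : V) : corootPairing (-x) γ = -corootPairing x γ := by
  simp [corootPairing, neg_div]

lemma corootPairing_neg_right (x γ : V) : corootPairing x (-γ) = -corootPairing x γ := by
  simp [corootPairing, neg_div]

lemma corootPairing_sum_smul_left {ι : Type*} (s : Finset ι) (c : ι → ℝ) (v : ι → V) (γ : V) :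
    corootPairing (∑ i ∈ s, c i • v i) γ = ∑ i ∈ s, c i * corootPairing (v i) γ := by
  simp only [corootPairing, sum_inner, real_inner_smul_left, Finset.mul_sum, Finset.sum_div]
  exact Finset.sum_congr rfl fun i _ => by ring

lemma corootPairing_self {γ : V} (hγ : γ ≠ 0) : corootPairing γ γ = 2 :=
  mul_div_cancel_right₀ 2 (inner_self_ne_zero.2 hγ)

lemma corootPairing_nonneg_iff {x γ : V} (hγ : γ ≠ 0) : 0 ≤ corootPairing x γ ↔ 0 ≤ ⟪x, γ⟫ := by
  rw [corootPairing, le_div_iff₀ (real_inner_self_pos.2 hγ), zero_mul]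
  exact mul_nonneg_iff_of_pos_left two_pos

lemma corootPairing_neg_comm {x γ : V} (hx : x ≠ 0) (hγ : γ ≠ 0) :
    corootPairing x γ < 0 ↔ corootPairing γ x < 0 := by
  rw [← not_le, ← not_le, corootPairing_nonneg_iff hγ, corootPairing_nonneg_iff hx,
    real_inner_comm]

lemma neg_two_lt_corootPairing {x γ : V} (hle : ⟪x, x⟫ ≤ ⟪γ, γ⟫) (hne : x ≠ -γ) :
    -2 < corootPairing x γ := by
  have hγ : γ ≠ 0 := by
    rintro rfl
    rw [inner_zero_left] at hle
    exact hne (by simpa using real_inner_self_nonpos.1 hle)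
  have hpos : 0 < ⟪x + γ, x + γ⟫ :=
    real_inner_self_pos.2 fun h => hne (eq_neg_of_add_eq_zero_left h)
  rw [real_inner_add_add_self] at hpos
  rw [corootPairing, lt_div_iff₀ (real_inner_self_pos.2 hγ)]
  linarith

lemma rootReflection_eq_reflection (δ x : V) : rootReflection δ x = (ℝ ∙ δ)ᗮ.reflection x := by
  rw [Submodule.reflection_orthogonal_apply, Submodule.reflection_singleton_apply, neg_sub,
    rootReflection, corootPairing, real_inner_comm, real_inner_self_eq_norm_sq,
    mul_div_assoc, mul_smul, ofNat_smul_eq_nsmul]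
  rfl

lemma rootReflection_involutive (δ : V) : Function.Involutive (rootReflection δ) := fun x => by
  simp only [rootReflection_eq_reflection, Submodule.reflection_reflection]

lemma rootReflection_self (δ : V) : rootReflection δ δ = -δ := by
  rw [rootReflection_eq_reflection, Submodule.reflection_orthogonalComplement_singleton_eq_neg]

lemma inner_rootReflection_rootReflection (δ x y : V) :
    ⟪rootReflection δ x, rootReflection δ y⟫ = ⟪x, y⟫ := by
  simp only [rootReflection_eq_reflection, LinearIsometryEquiv.inner_map_map]

lemma corootPairing_rootReflection_left (δ x y : V) :
    corootPairing (rootReflection δ x) y = corootPairing x (rootReflection δ y) := by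
  conv_lhs => rw [← rootReflection_involutive δ y]
  simp only [corootPairing, inner_rootReflection_rootReflection]

namespace RootSystemWithBase

variable (R : RootSystemWithBase V)

lemma ne_zero_of_mem {γ : V} (hγ : γ ∈ R.Φ) : γ ≠ 0 :=
  ne_of_mem_of_not_mem hγ R.zero_not_mem

lemma mem_Pos {γ : V} : γ ∈ R.Pos ↔ γ ∈ R.Φ ∧ ∀ β ∈ R.Δ, 0 ≤ R.coeff γ β :=
  Finset.mem_filter

/-! ### Coefficients and height -/

lemma coeff_eq_of_eq_sum {γ : V} (hγ : γ ∈ R.Φ) {c : V → ℝ} (hc : γ = ∑ β ∈ R.Δ, c β • β)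
    {β : V} (hβ : β ∈ R.Δ) : (R.coeff γ β : ℝ) = c β := by
  have hindep : LinearIndepOn ℝ id (R.Δ : Set V) := R.base_indep
  refine sub_eq_zero.1 (linearIndepOn_finset_iff.1 hindep (fun β => R.coeff γ β - c β) ?_ β hβ)
  simp only [id, sub_smul, Finset.sum_sub_distrib]
  rw [← R.root_eq_sum γ hγ, ← hc, sub_self]

lemma coeff_rootReflection {γ δ β : V} (hγ : γ ∈ R.Φ) (hδ : δ ∈ R.Φ) (hβ : β ∈ R.Δ) :
    (R.coeff (rootReflection δ γ) β : ℝ) = R.coeff γ β - corootPairing γ δ * R.coeff δ β := by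
  refine R.coeff_eq_of_eq_sum (c := fun β => R.coeff γ β - corootPairing γ δ * R.coeff δ β)
    (R.reflection_mem δ hδ γ hγ) ?_ hβ
  simp only [sub_smul, mul_smul, Finset.sum_sub_distrib]
  rw [← Finset.smul_sum, ← R.root_eq_sum γ hγ, ← R.root_eq_sum δ hδ, rootReflection]

lemma coeff_neg {γ β : V} (hγ : γ ∈ R.Φ) (hβ : β ∈ R.Δ) : R.coeff (-γ) β = -R.coeff γ β := by
  have h := R.coeff_rootReflection hγ hγ hβ
  rw [rootReflection_self, corootPairing_self (R.ne_zero_of_mem hγ)] at h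
  have h' : (R.coeff (-γ) β : ℝ) = -R.coeff γ β := by linarith
  exact_mod_cast h'

lemma coeff_of_mem_base {α β : V} (hα : α ∈ R.Δ) (hβ : β ∈ R.Δ) :
    R.coeff α β = if β = α then 1 else 0 := by
  have h := R.coeff_eq_of_eq_sum (c := fun β => if β = α then 1 else 0) (R.base_subset hα)
    (by simp [hα]) hβ
  exact_mod_cast h

lemma coeff_rootReflection_of_ne {α β γ : V} (hα : α ∈ R.Δ) (hβ : β ∈ R.Δ) (hγ : γ ∈ R.Φ)
    (hne : β ≠ α) : R.coeff (rootReflection α γ) β = R.coeff γ β := by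
  have h := R.coeff_rootReflection hγ (R.base_subset hα) hβ
  rw [R.coeff_of_mem_base hα hβ, if_neg hne, Int.cast_zero, mul_zero, sub_zero] at h
  exact_mod_cast h

/-- The height of a root: the sum of its coefficients on the base. The Coxeter number is one more
than the height of the highest root. As for `coeff`, the value is meaningful only on roots. -/
def height (γ : V) : ℤ := ∑ β ∈ R.Δ, R.coeff γ β

lemma height_of_mem_base {α : V} (hα : α ∈ R.Δ) : R.height α = 1 := by
  rw [height, Finset.sum_congr rfl fun β hβ => R.coeff_of_mem_base hα hβ,
    Finset.sum_ite_eq', if_pos hα]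

lemma height_rootReflection {γ δ : V} (hγ : γ ∈ R.Φ) (hδ : δ ∈ R.Φ) :
    (R.height (rootReflection δ γ) : ℝ) = R.height γ - corootPairing γ δ * R.height δ := by
  simp only [height, Int.cast_sum]
  rw [Finset.sum_congr rfl fun β hβ => R.coeff_rootReflection hγ hδ hβ, Finset.sum_sub_distrib,
    Finset.mul_sum]

/-! ### Positive roots -/

lemma mem_Pos_of_mem_base {α : V} (hα : α ∈ R.Δ) : α ∈ R.Pos := by
  refine R.mem_Pos.2 ⟨R.base_subset hα, fun β hβ => ?_⟩
  rw [R.coeff_of_mem_base hα hβ]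
  split_ifs <;> decide

lemma exists_coeff_pos {γ : V} (hγ : γ ∈ R.Pos) : ∃ β ∈ R.Δ, 0 < R.coeff γ β := by
  obtain ⟨hγΦ, hnonneg⟩ := R.mem_Pos.1 hγ
  by_contra! hnonpos
  refine R.ne_zero_of_mem hγΦ ?_
  rw [R.root_eq_sum γ hγΦ]
  refine Finset.sum_eq_zero fun β hβ => ?_
  rw [le_antisymm (hnonpos β hβ) (hnonneg β hβ), Int.cast_zero, zero_smul]

lemma mem_Pos_of_coeff_pos {γ β : V} (hγ : γ ∈ R.Φ) (hβ : β ∈ R.Δ) (hpos : 0 < R.coeff γ β) :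
    γ ∈ R.Pos :=
  R.mem_Pos.2 ⟨hγ, (R.root_sign γ hγ).resolve_right fun h => (h β hβ).not_gt hpos⟩

lemma neg_notMem_Pos {γ : V} (hγ : γ ∈ R.Pos) : -γ ∉ R.Pos := fun hneg => by
  obtain ⟨β, hβ, hpos⟩ := R.exists_coeff_pos hγ
  have hnonneg := (R.mem_Pos.1 hneg).2 β hβ
  rw [R.coeff_neg (R.mem_Pos.1 hγ).1 hβ] at hnonneg
  omega

lemma exists_coeff_pos_of_ne {α γ : V} (hα : α ∈ R.Δ) (hγ : γ ∈ R.Pos) (hne : γ ≠ α) :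
    ∃ β ∈ R.Δ, β ≠ α ∧ 0 < R.coeff γ β := by
  obtain ⟨hγΦ, hnonneg⟩ := R.mem_Pos.1 hγ
  by_contra! hnonpos
  have hsmul : γ = (R.coeff γ α : ℝ) • α := by
    conv_lhs => rw [R.root_eq_sum γ hγΦ]
    refine Finset.sum_eq_single_of_mem α hα fun β hβ hβα => ?_
    rw [le_antisymm (hnonpos β hβ hβα) (hnonneg β hβ), Int.cast_zero, zero_smul]
  rcases R.reduced α (R.base_subset hα) _ (hsmul ▸ hγΦ) with hone | hneg
  · exact hne (by rw [hsmul, hone, one_smul])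
  · rw [hneg, neg_one_smul] at hsmul
    exact R.neg_notMem_Pos (R.mem_Pos_of_mem_base hα) (hsmul ▸ hγ)

lemma rootReflection_mem_Pos_erase {α γ : V} (hα : α ∈ R.Δ) (hγ : γ ∈ R.Pos.erase α) :
    rootReflection α γ ∈ R.Pos.erase α := by
  obtain ⟨hne, hpos⟩ := Finset.mem_erase.1 hγ
  have hγΦ := (R.mem_Pos.1 hpos).1
  obtain ⟨β, hβ, hβα, hcoeff⟩ := R.exists_coeff_pos_of_ne hα hpos hne
  rw [← R.coeff_rootReflection_of_ne hα hβ hγΦ hβα] at hcoeff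
  refine Finset.mem_erase.2 ⟨fun hfix => ?_,
    R.mem_Pos_of_coeff_pos (R.reflection_mem α (R.base_subset hα) γ hγΦ) hβ hcoeff⟩
  rw [hfix, R.coeff_of_mem_base hα hβ, if_neg hβα] at hcoeff
  exact hcoeff.false

/-! ### Sums of coroot pairings -/

lemma sum_Pos_erase_rootReflection {M : Type*} [AddCommMonoid M] {α : V} (hα : α ∈ R.Δ)
    (f : V → M) :
    ∑ γ ∈ R.Pos.erase α, f (rootReflection α γ) = ∑ γ ∈ R.Pos.erase α, f γ :=
  Finset.sum_bij' (fun γ _ => rootReflection α γ) (fun γ _ => rootReflection α γ)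
    (fun _ => R.rootReflection_mem_Pos_erase hα) (fun _ => R.rootReflection_mem_Pos_erase hα)
    (fun γ _ => rootReflection_involutive α γ) (fun γ _ => rootReflection_involutive α γ)
    fun _ _ => rfl

lemma sum_Pos_corootPairing_of_mem_base {α : V} (hα : α ∈ R.Δ) :
    ∑ γ ∈ R.Pos, corootPairing α γ = 2 := by
  have hsum : ∑ γ ∈ R.Pos.erase α, corootPairing α γ = 0 := by
    rw [← self_eq_neg, ← Finset.sum_neg_distrib]
    calc ∑ γ ∈ R.Pos.erase α, corootPairing α γ
        = ∑ γ ∈ R.Pos.erase α, corootPairing α (rootReflection α γ) :=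
          (R.sum_Pos_erase_rootReflection hα _).symm
      _ = ∑ γ ∈ R.Pos.erase α, -corootPairing α γ := by
          simp only [← corootPairing_rootReflection_left, rootReflection_self,
            corootPairing_neg_left]
  rw [← Finset.add_sum_erase _ _ (R.mem_Pos_of_mem_base hα), hsum, add_zero,
    corootPairing_self (R.ne_zero_of_mem (R.base_subset hα))]

lemma sum_Pos_corootPairing {γ : V} (hγ : γ ∈ R.Φ) :
    ∑ δ ∈ R.Pos, corootPairing γ δ = 2 * R.height γ := by
  calc ∑ δ ∈ R.Pos, corootPairing γ δ
      = ∑ δ ∈ R.Pos, ∑ β ∈ R.Δ, (R.coeff γ β : ℝ) * corootPairing β δ := by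
        simp only [← corootPairing_sum_smul_left, ← R.root_eq_sum γ hγ]
    _ = ∑ β ∈ R.Δ, (R.coeff γ β : ℝ) * ∑ δ ∈ R.Pos, corootPairing β δ := by
        rw [Finset.sum_comm]
        simp only [Finset.mul_sum]
    _ = ∑ β ∈ R.Δ, (R.coeff γ β : ℝ) * 2 :=
        Finset.sum_congr rfl fun β hβ => by rw [R.sum_Pos_corootPairing_of_mem_base hβ]
    _ = 2 * R.height γ := by rw [← Finset.sum_mul, height, Int.cast_sum, mul_comm]

lemma sum_Pos_abs_corootPairing_rootReflection {β : V} (hβ : β ∈ R.Δ) (x : V) :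
    ∑ γ ∈ R.Pos, |corootPairing (rootReflection β x) γ| = ∑ γ ∈ R.Pos, |corootPairing x γ| := by
  have hpos := R.mem_Pos_of_mem_base hβ
  simp only [corootPairing_rootReflection_left]
  rw [← Finset.add_sum_erase _ _ hpos, ← Finset.add_sum_erase _ _ hpos, rootReflection_self,
    corootPairing_neg_right, abs_neg,
    R.sum_Pos_erase_rootReflection hβ fun γ => |corootPairing x γ|]

/-! ### Dominance and the highest root -/

/-- A vector is dominant if it lies in the closed fundamental chamber of the base. -/
def IsDominant (x : V) : Prop := ∀ β ∈ R.Δ, 0 ≤ ⟪x, β⟫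

variable {R} {θ : V}

lemma IsDominant.inner_nonneg {x γ : V} (hx : R.IsDominant x) (hγ : γ ∈ R.Pos) :
    0 ≤ ⟪x, γ⟫ := by
  obtain ⟨hγΦ, hnonneg⟩ := R.mem_Pos.1 hγ
  rw [R.root_eq_sum γ hγΦ, inner_sum]
  refine Finset.sum_nonneg fun β hβ => ?_
  rw [real_inner_smul_right]
  exact mul_nonneg (Int.cast_nonneg (hnonneg β hβ)) (hx β hβ)

lemma IsDominant.inner_le_inner_highestRoot {x γ : V} (hx : R.IsDominant x)
    (hθ : R.IsHighestRoot θ) (hγ : γ ∈ R.Φ) : ⟪x, γ⟫ ≤ ⟪x, θ⟫ := by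
  rw [R.root_eq_sum γ hγ, R.root_eq_sum θ hθ.1]
  simp only [inner_sum, real_inner_smul_right]
  exact Finset.sum_le_sum fun β hβ =>
    mul_le_mul_of_nonneg_right (Int.cast_le.2 (hθ.2 γ hγ β hβ)) (hx β hβ)

lemma IsHighestRoot.isDominant (hθ : R.IsHighestRoot θ) : R.IsDominant θ := fun β hβ => by
  have hβΦ := R.base_subset hβ
  have hle : (R.coeff (rootReflection β θ) β : ℝ) ≤ R.coeff θ β :=
    Int.cast_le.2 (hθ.2 _ (R.reflection_mem β hβΦ θ hθ.1) β hβ)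
  rw [R.coeff_rootReflection hθ.1 hβΦ hβ, R.coeff_of_mem_base hβ hβ, if_pos rfl, Int.cast_one,
    mul_one, sub_le_self_iff] at hle
  exact (corootPairing_nonneg_iff (R.ne_zero_of_mem hβΦ)).1 hle

lemma exists_isDominant_of_invariant {X : Type*} {f : V → X}
    (hf : ∀ β ∈ R.Δ, ∀ x, f (rootReflection β x) = f x) {γ : V} (hγ : γ ∈ R.Φ) :
    ∃ δ ∈ R.Φ, R.IsDominant δ ∧ f δ = f γ := by
  -- A root of maximal height in the fibre of `f` is dominant: a simple root pairing negatively
  -- with it would reflect it to a higher one.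
  obtain ⟨δ, hδ, hmax⟩ := (R.Φ.filter fun δ => f δ = f γ).exists_max_image R.height
    ⟨γ, Finset.mem_filter.2 ⟨hγ, rfl⟩⟩
  obtain ⟨hδΦ, hfδ⟩ := Finset.mem_filter.1 hδ
  refine ⟨δ, hδΦ, fun β hβ => ?_, hfδ⟩
  have hβΦ := R.base_subset hβ
  have hle : (R.height (rootReflection β δ) : ℝ) ≤ R.height δ :=
    Int.cast_le.2 (hmax _ (Finset.mem_filter.2
      ⟨R.reflection_mem β hβΦ δ hδΦ, (hf β hβ δ).trans hfδ⟩))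
  rw [R.height_rootReflection hδΦ hβΦ, R.height_of_mem_base hβ, Int.cast_one, mul_one,
    sub_le_self_iff] at hle
  exact (corootPairing_nonneg_iff (R.ne_zero_of_mem hβΦ)).1 hle

lemma IsHighestRoot.inner_self_le (hθ : R.IsHighestRoot θ) {γ : V} (hγ : γ ∈ R.Φ) :
    ⟪γ, γ⟫ ≤ ⟪θ, θ⟫ := by
  obtain ⟨δ, hδ, hdom, hnorm⟩ := R.exists_isDominant_of_invariant (f := fun x => ⟪x, x⟫)
    (fun β _ x => inner_rootReflection_rootReflection β x x) hγ
  calc ⟪γ, γ⟫ = ⟪δ, δ⟫ := hnorm.symm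
    _ ≤ ⟪δ, θ⟫ := hdom.inner_le_inner_highestRoot hθ hδ
    _ = ⟪θ, δ⟫ := real_inner_comm _ _
    _ ≤ ⟪θ, θ⟫ := hθ.isDominant.inner_le_inner_highestRoot hθ hδ

lemma IsDominant.eq_highestRoot {δ : V} (hdom : R.IsDominant δ) (hθ : R.IsHighestRoot θ)
    (hδ : δ ∈ R.Φ) (hlong : ⟪δ, δ⟫ = ⟪θ, θ⟫) : δ = θ := by
  have hle : ⟪δ, δ⟫ ≤ ⟪δ, θ⟫ := hdom.inner_le_inner_highestRoot hθ hδ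
  refine sub_eq_zero.1 (real_inner_self_nonpos.1 ?_)
  rw [real_inner_sub_sub_self]
  linarith

-- Applied to the quotient of `V` by the Weyl group, this says that the long roots are conjugate.
lemma IsHighestRoot.apply_eq_of_invariant (hθ : R.IsHighestRoot θ) {X : Type*} {f : V → X}
    (hf : ∀ β ∈ R.Δ, ∀ x, f (rootReflection β x) = f x) {α : V} (hα : α ∈ R.Φ)
    (hlong : ⟪α, α⟫ = ⟪θ, θ⟫) : f α = f θ := by
  obtain ⟨δ, hδ, hdom, heq⟩ := R.exists_isDominant_of_invariant (f := fun x => (⟪x, x⟫, f x))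
    (fun β hβ x => Prod.ext (inner_rootReflection_rootReflection β x x) (hf β hβ x)) hα
  obtain ⟨hnorm, hfδ⟩ := Prod.mk.inj heq
  rw [← hfδ, hdom.eq_highestRoot hθ hδ (hnorm.trans hlong)]

lemma IsHighestRoot.sum_Pos_abs_corootPairing (hθ : R.IsHighestRoot θ) {α : V} (hα : α ∈ R.Φ)
    (hlong : ⟪α, α⟫ = ⟪θ, θ⟫) : ∑ γ ∈ R.Pos, |corootPairing α γ| = 2 * R.height θ := by
  calc ∑ γ ∈ R.Pos, |corootPairing α γ|
      = ∑ γ ∈ R.Pos, |corootPairing θ γ| :=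
        hθ.apply_eq_of_invariant (f := fun x => ∑ γ ∈ R.Pos, |corootPairing x γ|)
          (fun _ => R.sum_Pos_abs_corootPairing_rootReflection) hα hlong
    _ = ∑ γ ∈ R.Pos, corootPairing θ γ := Finset.sum_congr rfl fun γ hγ =>
        abs_of_nonneg ((corootPairing_nonneg_iff (R.ne_zero_of_mem (R.mem_Pos.1 hγ).1)).2
          (hθ.isDominant.inner_nonneg hγ))
    _ = 2 * R.height θ := R.sum_Pos_corootPairing hθ.1

lemma IsHighestRoot.corootPairing_eq_neg_one_iff (hθ : R.IsHighestRoot θ) {α γ : V}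
    (hα : α ∈ R.Pos) (hlong : ⟪α, α⟫ = ⟪θ, θ⟫) (hγ : γ ∈ R.Pos) :
    corootPairing γ α = -1 ↔ corootPairing α γ < 0 := by
  have hαΦ := (R.mem_Pos.1 hα).1
  have hγΦ := (R.mem_Pos.1 hγ).1
  rw [corootPairing_neg_comm (R.ne_zero_of_mem hαΦ) (R.ne_zero_of_mem hγΦ)]
  have hlt : -2 < corootPairing γ α :=
    neg_two_lt_corootPairing ((hθ.inner_self_le hγΦ).trans_eq hlong.symm) fun h =>
      R.neg_notMem_Pos hα (h ▸ hγ)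
  obtain ⟨n, hn⟩ := R.crystallographic γ hγΦ α hαΦ
  rw [hn] at hlt ⊢
  norm_cast at hlt ⊢
  omega

end RootSystemWithBase

theorem sum_pairing_eq_two_sub_coxeterNumber_general (R : RootSystemWithBase V) {θ : V}
    (hθ : R.IsHighestRoot θ) {α : V} (hα : α ∈ R.Pos) (hlong : ⟪α, α⟫ = ⟪θ, θ⟫) :
    (∑ γ ∈ R.Pos.filter (fun γ => corootPairing γ α = -1), corootPairing α γ
        = R.height α - R.height θ) ∧
    ((∃ k : ℤ, ∑ γ ∈ R.Pos.filter (fun γ => corootPairing γ α = -1),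
          corootPairing α γ = 2 * (k : ℝ))
        ↔ Even (R.height α + R.height θ)) := by
  have hαΦ := (R.mem_Pos.1 hα).1
  have hsum : ∑ γ ∈ R.Pos.filter (fun γ => corootPairing γ α = -1), corootPairing α γ
      = R.height α - R.height θ := by
    have htwo := two_nsmul_sum_filter_neg R.Pos (corootPairing α)
    rw [R.sum_Pos_corootPairing hαΦ, hθ.sum_Pos_abs_corootPairing hαΦ hlong, nsmul_eq_mul] at htwo
    rw [Finset.filter_congr fun γ hγ => hθ.corootPairing_eq_neg_one_iff hα hlong hγ]
    push_cast at htwo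
    linarith
  refine ⟨hsum, ?_⟩
  rw [hsum, Int.even_add, ← Int.even_sub, even_iff_exists_two_mul]
  norm_cast

/-- For a finite, reduced, irreducible, crystallographic root
system `Φ` with base `Δ`, positive roots `Φ⁺`, highest root
`θ = Σ_{β∈Δ} m_β·β` and Coxeter number `h = 1 + Σ_{β∈Δ} m_β`, and for every
long simple root `α ∈ Δ`, one has
`Σ_{γ∈Φ⁺, ⟨γ,α^∨⟩ = −1} ⟨α,γ^∨⟩ = 2 − h`; in particular, this sum is even if
and only if the Coxeter number `h` is even. -/
theorem sum_pairing_eq_two_sub_coxeterNumber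
    (R : RootSystemWithBase V) (hirr : R.Irreducible)
    (θ : V) (hθ : R.IsHighestRoot θ)
    (α : V) (hα : α ∈ R.Δ) (hlong : ⟪α, α⟫ = ⟪θ, θ⟫) :
    (∑ γ ∈ R.Pos.filter (fun γ => corootPairing γ α = -1), corootPairing α γ
        = 2 - (1 + ∑ β ∈ R.Δ, (R.coeff θ β : ℝ))) ∧
    ((∃ k : ℤ, ∑ γ ∈ R.Pos.filter (fun γ => corootPairing γ α = -1),
          corootPairing α γ = 2 * (k : ℝ))
        ↔ Even (1 + ∑ β ∈ R.Δ, R.coeff θ β)) := by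
  have h := sum_pairing_eq_two_sub_coxeterNumber_general R hθ (R.mem_Pos_of_mem_base hα) hlong
  rw [R.height_of_mem_base hα] at h
  exact ⟨h.1.trans (by push_cast [RootSystemWithBase.height]; ring), h.2⟩

end
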